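/- (Solution of the corporate-bond reduced equation.) Let T ∈ ℝ, K > 0, α > 0, m > 0, n ≥ 0, and let σ_z : ℝ → ℝ be continuous with σ_z(u) ≠ 0 for all u. For t < T set σ(t)² = ∫_{t}^{T} σ_z(u)² du and σ(t) = √(σ(t)²) > 0. Define, for z > 0 and t < T, U(z, t) = K + (α/(m+nα))·z·N(d̄₁) − K·N(d̄₂), where d̄₁ = (ln(α·z/(K(m+nα))) + σ(t)²/2)/σ(t) and d̄₂ = d̄₁ − σ(t). Then U satisfies ∂U/∂t + (1/2)σ_z(t)² z² ∂²U/∂z² = 0 at every point (z, t) with z > 0 and t < T, and for every z > 0, U(z, t) → K + (α/(m+nα))·max(z − K(m+nα)/α, 0) as t → T from the left. -/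

import Mathlib

/-- The standard normal cumulative distribution function
`N(x) = (2π)^{-1/2} ∫_{-∞}^{x} e^{-u²/2} du`. -/
noncomputable def stdNormalCDF (x : ℝ) : ℝ :=
  (Real.sqrt (2 * Real.pi))⁻¹ * ∫ u in Set.Iic x, Real.exp (-u ^ 2 / 2)

/-!
With `a = α / c`, `c = m + n * α` and `k = K / a`, the claimed solution is `K + a * C`, where `C` is
the Black-Scholes call price with strike `k` and no interest. Since `k φ(d₁ - s) = x φ(d₁)`, the
derivative of `d₁` drops out of every first derivative of `C`, which leaves `∂C/∂x = N(d₁)` and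
`∂C/∂s = x φ(d₁)`. Hence `∂²C/∂x² = φ(d₁) / (x s)`, so that `∂C/∂s = s x² ∂²C/∂x²`. Substituting
`s² = σ(t)²`, whose `t`-derivative is `-σ_z(t)²`, gives the equation. As `s` tends to `0` from the
right, `d₁` and `d₁ - s` tend together to `-∞`, `0` or `∞` according to the sign of `x - k`.
-/

open MeasureTheory ProbabilityTheory Filter Set
open scoped Topology

section StandardNormal

theorem gaussianPDFReal_zero_one (x : ℝ) :
    gaussianPDFReal 0 1 x = (√(2 * Real.pi))⁻¹ * Real.exp (-x ^ 2 / 2) := by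
  simp [gaussianPDFReal]

theorem continuous_gaussianPDFReal (μ : ℝ) (v : NNReal) : Continuous (gaussianPDFReal μ v) := by
  unfold gaussianPDFReal
  fun_prop

theorem stdNormalCDF_eq_integral_gaussianPDFReal (x : ℝ) :
    stdNormalCDF x = ∫ u in Iic x, gaussianPDFReal 0 1 u := by
  simp only [stdNormalCDF, gaussianPDFReal_zero_one, integral_const_mul]

theorem stdNormalCDF_eq_cdf : stdNormalCDF = cdf (gaussianReal 0 1) := by
  ext x
  rw [cdf_eq_real, measureReal_def, gaussianReal_apply_eq_integral 0 one_ne_zero,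
    ENNReal.toReal_ofReal (integral_nonneg (gaussianPDFReal_nonneg 0 1)),
    stdNormalCDF_eq_integral_gaussianPDFReal]

theorem tendsto_stdNormalCDF_atBot : Tendsto stdNormalCDF atBot (𝓝 0) :=
  stdNormalCDF_eq_cdf ▸ tendsto_cdf_atBot _

theorem tendsto_stdNormalCDF_atTop : Tendsto stdNormalCDF atTop (𝓝 1) :=
  stdNormalCDF_eq_cdf ▸ tendsto_cdf_atTop _

theorem hasDerivAt_integral_Iic {E : Type*} [NormedAddCommGroup E] [NormedSpace ℝ E]
    [CompleteSpace E] {f : ℝ → E} {x : ℝ} (hf : Integrable f) (hx : ContinuousAt f x) :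
    HasDerivAt (fun y => ∫ u in Iic y, f u) (f x) x := by
  have hsplit : (fun y => ∫ u in Iic y, f u) =
      fun y => (∫ u in Iic x, f u) + ∫ u in x..y, f u := by
    ext y
    rw [← intervalIntegral.integral_Iic_sub_Iic hf.integrableOn hf.integrableOn, add_sub_cancel]
  rw [hsplit]
  exact (intervalIntegral.integral_hasDerivAt_right hf.intervalIntegrable
    hf.1.stronglyMeasurableAtFilter hx).const_add _

theorem hasDerivAt_stdNormalCDF (x : ℝ) : HasDerivAt stdNormalCDF (gaussianPDFReal 0 1 x) x := by
  rw [funext stdNormalCDF_eq_integral_gaussianPDFReal]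
  exact hasDerivAt_integral_Iic (integrable_gaussianPDFReal 0 1)
    (continuous_gaussianPDFReal 0 1).continuousAt

end StandardNormal

/-- The Black-Scholes quantity `d₁` for strike `k`, total standard deviation `s` and spot price `x`,
with zero interest rate; `d₂` is `blackD k s x - s`. -/
noncomputable def blackD (k s x : ℝ) : ℝ := (Real.log (x / k) + s ^ 2 / 2) / s

/-- The Black-Scholes price of a call with strike `k`, total standard deviation `s` and spot price
`x`, with zero interest rate. The spot price comes last so that `blackCall k s` is the price as a
function of it. -/
noncomputable def blackCall (k s x : ℝ) : ℝ :=
  x * stdNormalCDF (blackD k s x) - k * stdNormalCDF (blackD k s x - s)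

section Derivatives

variable {k s x : ℝ}

theorem strike_mul_gaussianPDFReal_blackD_sub (hk : 0 < k) (hs : s ≠ 0) (hx : 0 < x) :
    k * gaussianPDFReal 0 1 (blackD k s x - s) = x * gaussianPDFReal 0 1 (blackD k s x) := by
  have hexponent : -(blackD k s x - s) ^ 2 / 2 = Real.log (x / k) + -blackD k s x ^ 2 / 2 := by
    unfold blackD
    field_simp
    ring
  rw [gaussianPDFReal_zero_one, gaussianPDFReal_zero_one, hexponent, Real.exp_add,
    Real.exp_log (div_pos hx hk)]
  field_simp

theorem hasDerivAt_blackD (hk : k ≠ 0) (hx : x ≠ 0) :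
    HasDerivAt (blackD k s) (1 / (x * s)) x := by
  have hlog := ((hasDerivAt_id x).div_const k).log (div_ne_zero hx hk)
  refine ((hlog.add_const (s ^ 2 / 2)).div_const s).congr_deriv ?_
  simp only [id]
  field_simp

theorem hasDerivAt_blackCall_comp {ξ ς : ℝ → ℝ} {ξ' ς' t : ℝ} (hk : 0 < k)
    (hξ : HasDerivAt ξ ξ' t) (hς : HasDerivAt ς ς' t) (hξt : 0 < ξ t) (hςt : ς t ≠ 0) :
    HasDerivAt (fun τ => blackCall k (ς τ) (ξ τ))
      (ξ' * stdNormalCDF (blackD k (ς t) (ξ t)) +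
        ξ t * gaussianPDFReal 0 1 (blackD k (ς t) (ξ t)) * ς') t := by
  have hd : DifferentiableAt ℝ (fun τ => blackD k (ς τ) (ξ τ)) t :=
    ((((hξ.div_const k).log (div_pos hξt hk).ne').add ((hς.pow 2).div_const 2)).div
      hς hςt).differentiableAt
  have hN₁ := (hasDerivAt_stdNormalCDF _).comp t hd.hasDerivAt
  have hN₂ := (hasDerivAt_stdNormalCDF _).comp t (hd.hasDerivAt.sub hς)
  refine ((hξ.mul hN₁).sub (hN₂.const_mul k)).congr_deriv ?_
  simp only [Function.comp_apply, Pi.sub_apply]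
  linear_combination (ς' - deriv (fun τ => blackD k (ς τ) (ξ τ)) t) *
    strike_mul_gaussianPDFReal_blackD_sub hk hςt hξt

theorem deriv_blackCall (hk : 0 < k) (hs : s ≠ 0) (hx : 0 < x) :
    deriv (blackCall k s) x = stdNormalCDF (blackD k s x) := by
  simpa using (hasDerivAt_blackCall_comp hk (hasDerivAt_id x) (hasDerivAt_const x s) hx hs).deriv

theorem deriv_deriv_blackCall (hk : 0 < k) (hs : s ≠ 0) (hx : 0 < x) :
    deriv (deriv (blackCall k s)) x = gaussianPDFReal 0 1 (blackD k s x) * (1 / (x * s)) := by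
  have hdelta : deriv (blackCall k s) =ᶠ[𝓝 x] stdNormalCDF ∘ blackD k s :=
    (eventually_gt_nhds hx).mono fun y hy => deriv_blackCall hk hs hy
  rw [hdelta.deriv_eq]
  exact ((hasDerivAt_stdNormalCDF _).comp x (hasDerivAt_blackD hk.ne' hx.ne')).deriv

theorem hasDerivAt_blackCall_sqrt {v : ℝ → ℝ} {v' t : ℝ} (hk : 0 < k) (hx : 0 < x)
    (hv : HasDerivAt v v' t) (hvt : 0 < v t) :
    HasDerivAt (fun τ => blackCall k √(v τ) x)
      (v' / 2 * x ^ 2 * deriv (deriv (blackCall k √(v t))) x) t := by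
  have hs : √(v t) ≠ 0 := (Real.sqrt_pos.2 hvt).ne'
  refine (hasDerivAt_blackCall_comp hk (hasDerivAt_const t x) (hv.sqrt hvt.ne')
    hx hs).congr_deriv ?_
  rw [deriv_deriv_blackCall hk hs hx]
  field_simp
  ring

end Derivatives

section ZeroVarianceLimit

variable {k x : ℝ}

theorem tendsto_half_nhdsGT_zero : Tendsto (fun s : ℝ => s / 2) (𝓝[>] 0) (𝓝 0) :=
  tendsto_nhdsWithin_of_tendsto_nhds (Continuous.tendsto' (by fun_prop) _ _ (zero_div 2))

theorem blackD_eventuallyEq (k x : ℝ) :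
    (fun s => blackD k s x) =ᶠ[𝓝[>] 0] fun s => Real.log (x / k) * s⁻¹ + s / 2 := by
  filter_upwards [self_mem_nhdsWithin] with s (hs : 0 < s)
  unfold blackD
  field_simp

theorem tendsto_blackD_atBot (hx : 0 < x) (hxk : x < k) :
    Tendsto (fun s => blackD k s x) (𝓝[>] 0) atBot := by
  have hlog : Real.log (x / k) < 0 :=
    Real.log_neg (div_pos hx (hx.trans hxk)) ((div_lt_one (hx.trans hxk)).2 hxk)
  exact ((tendsto_inv_nhdsGT_zero.const_mul_atTop_of_neg hlog).atBot_add
    tendsto_half_nhdsGT_zero).congr' (blackD_eventuallyEq k x).symm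

theorem tendsto_blackD_atTop (hk : 0 < k) (hkx : k < x) :
    Tendsto (fun s => blackD k s x) (𝓝[>] 0) atTop := by
  have hlog : 0 < Real.log (x / k) := Real.log_pos ((one_lt_div hk).2 hkx)
  exact ((tendsto_inv_nhdsGT_zero.const_mul_atTop hlog).atTop_add
    tendsto_half_nhdsGT_zero).congr' (blackD_eventuallyEq k x).symm

theorem tendsto_blackD_self (k : ℝ) : Tendsto (fun s => blackD k s k) (𝓝[>] 0) (𝓝 0) := by
  have hlog : Real.log (k / k) = 0 := by by_cases hk : k = 0 <;> simp [hk]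
  refine Tendsto.congr' (blackD_eventuallyEq k k).symm ?_
  simpa only [hlog, zero_mul, zero_add] using tendsto_half_nhdsGT_zero

theorem tendsto_blackCall_of_tendsto_blackD {F l : Filter ℝ} {y : ℝ}
    (hN : Tendsto stdNormalCDF l (𝓝 y)) (hd₁ : Tendsto (fun s => blackD k s x) F l)
    (hd₂ : Tendsto (fun s => blackD k s x - s) F l) :
    Tendsto (fun s => blackCall k s x) F (𝓝 ((x - k) * y)) := by
  rw [sub_mul]
  exact ((hN.comp hd₁).const_mul x).sub ((hN.comp hd₂).const_mul k)

theorem tendsto_blackCall_nhdsGT_zero (hk : 0 < k) (hx : 0 < x) :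
    Tendsto (fun s => blackCall k s x) (𝓝[>] 0) (𝓝 (max (x - k) 0)) := by
  have hneg : Tendsto (fun s : ℝ => -s) (𝓝[>] 0) (𝓝 0) :=
    tendsto_nhdsWithin_of_tendsto_nhds (Continuous.tendsto' (by fun_prop) _ _ neg_zero)
  rcases lt_trichotomy x k with hxk | rfl | hkx
  · have hd := tendsto_blackD_atBot hx hxk
    simpa [hxk.le] using
      tendsto_blackCall_of_tendsto_blackD tendsto_stdNormalCDF_atBot hd (hd.atBot_add hneg)
  · have hd := tendsto_blackD_self x
    simpa using tendsto_blackCall_of_tendsto_blackD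
      (hasDerivAt_stdNormalCDF 0).continuousAt.tendsto hd
      (by simpa only [add_zero, sub_eq_add_neg] using hd.add hneg)
  · have hd := tendsto_blackD_atTop hk hkx
    simpa [hkx.le] using
      tendsto_blackCall_of_tendsto_blackD tendsto_stdNormalCDF_atTop hd (hd.atTop_add hneg)

end ZeroVarianceLimit

theorem tendsto_intervalIntegral_nhdsLT {E : Type*} [NormedAddCommGroup E] [NormedSpace ℝ E]
    {f : ℝ → E} {a b : ℝ} (hab : a < b) (hf : IntervalIntegrable f volume a b) :
    Tendsto (fun t => ∫ u in t..b, f u) (𝓝[<] b) (𝓝 0) := by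
  have hf' : IntegrableOn f (uIcc a b) := by rwa [← intervalIntegrable_iff']
  have hcont := intervalIntegral.continuousOn_primitive_interval_left hf' b right_mem_uIcc
  rw [ContinuousWithinAt, intervalIntegral.integral_same, uIcc_of_le hab.le] at hcont
  rw [← nhdsWithin_Ico_eq_nhdsLT hab]
  exact hcont.mono_left (nhdsWithin_mono b Ico_subset_Icc_self)

theorem const_mul_blackCall_sqrt {a c K v z : ℝ} (ha : a ≠ 0) (hc : c ≠ 0) (hv : 0 ≤ v) :
    a / c * blackCall (K * c / a) √v z =
      a / c * z * stdNormalCDF ((Real.log (a * z / (K * c)) + v / 2) / √v) -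
        K * stdNormalCDF ((Real.log (a * z / (K * c)) + v / 2) / √v - √v) := by
  have hmoneyness : z / (K * c / a) = a * z / (K * c) := by
    rw [div_div_eq_mul_div, mul_comm]
  have hstrike : a / c * (K * c / a) = K := by field_simp
  rw [blackCall, blackD, hmoneyness, Real.sq_sqrt hv, mul_sub, ← mul_assoc, ← mul_assoc, hstrike]

theorem corporate_bond_reduced_solution_general {T K α c : ℝ} (hK : 0 < K) (hα : 0 < α)
    (hc : 0 < c) {σz s2 : ℝ → ℝ} (hσz : ContinuousOn σz (Iio T))
    (hint : ∀ t < T, IntervalIntegrable (fun u => σz u ^ 2) volume t T)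
    (hs2 : ∀ t, s2 t = ∫ u in t..T, σz u ^ 2) (hpos : ∀ t < T, 0 < s2 t) {U : ℝ → ℝ → ℝ}
    (hU : ∀ z t : ℝ, 0 < z → t < T →
      U z t = K
          + α / c * z * stdNormalCDF ((Real.log (α * z / (K * c)) + s2 t / 2) / √(s2 t))
          - K * stdNormalCDF ((Real.log (α * z / (K * c)) + s2 t / 2) / √(s2 t) - √(s2 t))) :
    (∀ z t : ℝ, 0 < z → t < T →
        deriv (fun τ => U z τ) t
            + (1 / 2) * (σz t) ^ 2 * z ^ 2 * deriv (deriv (fun w => U w t)) z = 0)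
    ∧
    (∀ z : ℝ, 0 < z →
        Tendsto (fun t => U z t) (𝓝[<] T) (𝓝 (K + α / c * max (z - K * c / α) 0))) := by
  have hk : 0 < K * c / α := by positivity
  have hUcall : ∀ z t, 0 < z → t < T → U z t = K + α / c * blackCall (K * c / α) √(s2 t) z := by
    intro z t hz ht
    rw [hU z t hz ht, const_mul_blackCall_sqrt hα.ne' hc.ne' (hpos t ht).le, add_sub_assoc]
  refine ⟨fun z t hz ht => ?_, fun z hz => ?_⟩
  · have hσt : ContinuousOn (fun u => σz u ^ 2) (Iio T) := hσz.pow 2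
    have hs2_deriv : HasDerivAt s2 (-σz t ^ 2) t :=
      funext hs2 ▸ intervalIntegral.integral_hasDerivAt_left (hint t ht)
        (hσt.stronglyMeasurableAtFilter isOpen_Iio t ht) (hσt.continuousAt (Iio_mem_nhds ht))
    have hUt : (fun τ => U z τ) =ᶠ[𝓝 t] fun τ => K + α / c * blackCall (K * c / α) √(s2 τ) z :=
      (eventually_lt_nhds ht).mono fun τ hτ => hUcall z τ hz hτ
    have hUz : (fun w => U w t) =ᶠ[𝓝 z] fun w => K + α / c * blackCall (K * c / α) √(s2 t) w :=
      (eventually_gt_nhds hz).mono fun w hw => hUcall w t hw ht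
    rw [hUt.deriv_eq, hUz.deriv.deriv_eq]
    simp only [deriv_const_add', deriv_const_mul_field']
    rw [(hasDerivAt_blackCall_sqrt hk hz hs2_deriv (hpos t ht)).deriv]
    ring
  · have hs2T : Tendsto s2 (𝓝[<] T) (𝓝 0) :=
      funext hs2 ▸ tendsto_intervalIntegral_nhdsLT (sub_one_lt T) (hint _ (sub_one_lt T))
    have hsqrt : Tendsto (fun t => √(s2 t)) (𝓝[<] T) (𝓝[>] 0) :=
      tendsto_nhdsWithin_iff.2 ⟨by simpa using hs2T.sqrt,
        eventually_mem_nhdsWithin.mono fun t ht => Real.sqrt_pos.2 (hpos t ht)⟩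
    refine Tendsto.congr' (eventually_mem_nhdsWithin.mono fun t ht => (hUcall z t hz ht).symm) ?_
    exact (((tendsto_blackCall_nhdsGT_zero hk hz).comp hsqrt).const_mul (α / c)).const_add K

/-- Solution of the corporate-bond reduced equation: the explicit formula solves the
degenerate equation with time-dependent volatility and attains the terminal payoff. -/
theorem corporate_bond_reduced_solution (T K α m n : ℝ)
    (hK : 0 < K) (hα : 0 < α) (hm : 0 < m) (hn : 0 ≤ n)
    (σz : ℝ → ℝ) (hσz : Continuous σz) (hσz0 : ∀ u, σz u ≠ 0)
    (s2 : ℝ → ℝ) (hs2 : ∀ t, s2 t = ∫ u in t..T, (σz u) ^ 2)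
    (U : ℝ → ℝ → ℝ)
    (hU : ∀ z t : ℝ, 0 < z → t < T →
      U z t = K
          + α / (m + n * α) * z * stdNormalCDF
              ((Real.log (α * z / (K * (m + n * α))) + s2 t / 2) / Real.sqrt (s2 t))
          - K * stdNormalCDF
              ((Real.log (α * z / (K * (m + n * α))) + s2 t / 2) / Real.sqrt (s2 t)
                - Real.sqrt (s2 t))) :
    (∀ z t : ℝ, 0 < z → t < T →
        deriv (fun τ => U z τ) t
            + (1 / 2) * (σz t) ^ 2 * z ^ 2 * deriv (deriv (fun w => U w t)) z = 0)
    ∧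
    (∀ z : ℝ, 0 < z →
        Filter.Tendsto (fun t => U z t) (nhdsWithin T (Set.Iio T))
          (nhds (K + α / (m + n * α) * max (z - K * (m + n * α) / α) 0))) := by
  have hint (t : ℝ) : IntervalIntegrable (fun u => σz u ^ 2) volume t T :=
    (hσz.pow 2).intervalIntegrable t T
  exact corporate_bond_reduced_solution_general hK hα (by positivity) hσz.continuousOn
    (fun t _ => hint t) hs2 (fun t ht => hs2 t ▸ intervalIntegral.intervalIntegral_pos_of_pos
      (hint t) (fun u => by have := hσz0 u; positivity) ht) hU
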